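/- arXiv:1507.04650 — 2 statements merged into one kernel-verified Lean document; each statement's English description precedes it below -/
import Mathlib

section
/- If d = (d_1,...,d_n) is a non-increasing sequence of positive integers with ∑ d_i = 2n - 2c for a positive integer c, n_1(d) ≤ n_{≥2}(d), and n_1(d) > 0, then there exists a forest F with degree sequence d having exactly n_1(d) support vertices, each adjacent to exactly one vertex of degree 1, and in which all vertices of degree at least 2 that are not support vertices have degree exactly 2 and induce a path of order n - 2·n_1(d). -/
open SimpleGraph Finset

/-- The degree of a vertex `v` in a simple graph `G`. -/
noncomputable def deg {V : Type*} [Fintype V] (G : SimpleGraph V) (v : V) : ℕ :=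
  Nat.card {u // G.Adj v u}

/-- The degree sequence of `G` as a multiset. -/
noncomputable def degSeq {V : Type*} [Fintype V] (G : SimpleGraph V) : Multiset ℕ :=
  Finset.univ.val.map (deg G)

/-- `D` is a dominating set of `G`. -/
def IsDomSet {V : Type*} (G : SimpleGraph V) (D : Set V) : Prop :=
  ∀ v ∉ D, ∃ u ∈ D, G.Adj u v

/-- The domination number of `G`. -/
noncomputable def domNum {V : Type*} [Fintype V] (G : SimpleGraph V) : ℕ :=
  sInf {k | ∃ D : Set V, IsDomSet G D ∧ D.ncard = k}

/-- `I` is an independent set of `G`. -/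
def IsIndepSet' {V : Type*} (G : SimpleGraph V) (I : Set V) : Prop :=
  ∀ u ∈ I, ∀ v ∈ I, ¬ G.Adj u v

/-- The independence number of `G`. -/
noncomputable def indepNum {V : Type*} [Fintype V] (G : SimpleGraph V) : ℕ :=
  sSup {k | ∃ I : Set V, IsIndepSet' G I ∧ I.ncard = k}

/-- `v` is a support vertex of `G`: degree at least 2 with a neighbor of degree 1. -/
noncomputable def IsSupport {V : Type*} [Fintype V] (G : SimpleGraph V) (v : V) : Prop :=
  2 ≤ deg G v ∧ ∃ u, G.Adj v u ∧ deg G u = 1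

/-!
Let `F` be a forest with `deg F ≤ e`, where `∑ e` is even and less than twice the order and where
every component of `F` has a vertex below its target. Then `F` extends to a forest with degree
function `e`: as long as degrees are missing, the degree function of an extension can be increased,
at worst by replacing an edge outside `F` by two edges at its ends.

With `k = n₁(d)`, take for `F` a perfect matching between the first `k` and the last `k` vertices
together with a path through the `n - 2k` vertices between them. Each vertex of target `1` is
saturated in `F` and so keeps its only neighbour, and the path stays induced because an edge between
two vertices of one component of `F` would close a cycle.
-/

section Degree

variable {V : Type*} [Fintype V] {G : SimpleGraph V}

theorem deg_eq_ncard (G : SimpleGraph V) (v : V) : deg G v = {u | G.Adj v u}.ncard := rfl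

theorem deg_eq_degree (G : SimpleGraph V) [DecidableRel G.Adj] (v : V) : deg G v = G.degree v := by
  rw [deg, Nat.card_eq_fintype_card]
  exact G.card_neighborSet_eq_degree v

theorem even_sum_deg (G : SimpleGraph V) : Even (∑ v, deg G v) := by
  classical
  simp only [deg_eq_degree, sum_degrees_eq_twice_card_edges, even_two_mul]

theorem sum_deg_add_two_of_isTree (hG : G.IsTree) : ∑ v, deg G v + 2 = 2 * Fintype.card V := by
  classical
  simp only [deg_eq_degree, sum_degrees_eq_twice_card_edges, ← hG.card_edgeFinset, mul_add, mul_one]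

theorem deg_le_card_of_forall_adj_mem {α : Type*} {f : V → α} (hf : f.Injective) {v : V}
    {t : Finset α} (h : ∀ u, G.Adj v u → f u ∈ t) : deg G v ≤ #t := by
  rw [deg_eq_ncard, ← Set.ncard_coe_finset]
  exact Set.ncard_le_ncard_of_injOn f h hf.injOn

theorem adj_iff_eq_of_deg_eq_one {u v w : V} (hv : deg G v = 1) (hu : G.Adj v u) :
    G.Adj v w ↔ w = u := by
  obtain ⟨a, ha⟩ := Set.ncard_eq_one.1 hv
  have hadj : ∀ z, G.Adj v z ↔ z = a := Set.ext_iff.1 ha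
  rw [hadj, (hadj u).1 hu]

theorem deg_sup_edge_left {u v : V} (hne : u ≠ v) (h : ¬G.Adj u v) :
    deg (G ⊔ edge u v) u = deg G u + 1 := by
  have hnbrs : {w | (G ⊔ edge u v).Adj u w} = insert v {w | G.Adj u w} := by
    ext w
    simp only [sup_adj, edge_adj, Set.mem_ofPred_eq, Set.mem_insert_iff]
    grind
  rw [deg_eq_ncard, deg_eq_ncard, hnbrs]
  exact Set.ncard_insert_of_notMem h

theorem deg_sup_edge [DecidableEq V] {u v : V} (hne : u ≠ v) (h : ¬G.Adj u v) :
    deg (G ⊔ edge u v) = deg G + Pi.single u 1 + Pi.single v 1 := by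
  funext t
  rcases eq_or_ne t u with rfl | htu
  · simp [deg_sup_edge_left hne h, hne]
  rcases eq_or_ne t v with rfl | htv
  · simp [edge_comm u t, deg_sup_edge_left hne.symm fun h' ↦ h h'.symm, hne.symm]
  · simp [deg_eq_ncard, edge_adj, htu, htv]

end Degree

section Forest

variable {V : Type*} {F G : SimpleGraph V}

theorem isAcyclic_of_lower_adj_unique [LinearOrder V]
    (h : ∀ ⦃u v w⦄, u < w → v < w → G.Adj u w → G.Adj v w → u = v) : G.IsAcyclic := by
  intro b c hc
  obtain ⟨m, hm, hmax⟩ := c.support.toFinset.exists_max_image id ⟨b, by simp⟩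
  rw [List.mem_toFinset] at hm
  let p := c.rotate m hm
  have hp : p.IsCycle := hc.rotate hm
  have lt_of_adj {u : V} (hu : u ∈ p.support) (hadj : G.Adj u m) : u < m :=
    lt_of_le_of_ne (hmax u (by simpa [p] using hu)) hadj.ne
  have hsnd := p.adj_snd hp.not_nil
  have hpen := p.adj_penultimate hp.not_nil
  refine hp.snd_ne_penultimate (h (lt_of_adj ?_ hsnd.symm) (lt_of_adj ?_ hpen) hsnd.symm hpen)
  · exact p.getVert_mem_support _
  · exact p.getVert_mem_support _

theorem adj_iff_of_le_isAcyclic (hG : G.IsAcyclic) (hFG : F ≤ G) {u v : V}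
    (huv : F.Reachable u v) : G.Adj u v ↔ F.Adj u v := by
  refine ⟨fun h ↦ ?_, fun h ↦ hFG h⟩
  have hle : F ⊔ edge u v ≤ G := sup_le hFG ((edge_le_iff G).2 (Or.inr h))
  exact ((isAcyclic_sup_fromEdgeSet_iff.1 (hG.anti hle)).2 huv).resolve_left h.ne

/-- The graph `G` with the edge `wa` replaced by the two edges `xw` and `ya`. In a forest, with `x`
and `y` in one component and `wa` in another, this raises only the degrees of `x` and `y`. -/
def reroute (G : SimpleGraph V) (x y w a : V) : SimpleGraph V :=
  G.deleteEdges {s(w, a)} ⊔ edge x w ⊔ edge y a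

variable {x y w a : V}

theorem deleteEdges_sup_edge (hwa : G.Adj w a) : G.deleteEdges {s(w, a)} ⊔ edge w a = G := by
  rw [deleteEdges, edge, sdiff_sup_cancel]
  exact (edge_le_iff G).2 (Or.inr hwa)

theorem le_reroute (hFG : F ≤ G) (hwa : ¬F.Adj w a) : F ≤ reroute G x y w a := by
  have hF : F ≤ G.deleteEdges {s(w, a)} := le_sdiff.2 ⟨hFG, (disjoint_edge F).2 hwa⟩
  exact hF.trans (le_sup_left.trans le_sup_left)

theorem reachable_deleteEdges_of_not_reachable (hxy : G.Reachable x y) (hxw : ¬G.Reachable x w) :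
    (G.deleteEdges {s(w, a)}).Reachable x y := by
  obtain ⟨p⟩ := hxy
  refine reachable_deleteEdges_iff_exists_walk.2 ⟨p, fun he ↦ hxw ?_⟩
  classical exact ⟨p.takeUntil w (p.fst_mem_support_of_mem_edges he)⟩

-- After `xw` is added, a `w`–`a` walk that avoids `wa` would close a cycle through `wa`; a `y`–`a`
-- walk would yield one, as `y` is joined to `w` through `x`.
theorem isAcyclic_reroute (hG : G.IsAcyclic) (hxy : G.Reachable x y) (hwa : G.Adj w a)
    (hxw : ¬G.Reachable x w) : (reroute G x y w a).IsAcyclic := by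
  set G' := G.deleteEdges {s(w, a)} with hG'
  have hxa : x ≠ a := fun h ↦ hxw (h ▸ hwa.symm.reachable)
  have hxy' : G'.Reachable x y := reachable_deleteEdges_of_not_reachable hxy hxw
  have hne : x ≠ w := fun h ↦ hxw (h ▸ .rfl)
  have hacyc : (G' ⊔ edge x w ⊔ edge w a).IsAcyclic := by
    rw [sup_right_comm, deleteEdges_sup_edge hwa]
    exact hG.sup_edge_of_not_reachable hxw
  have hnadj : ¬(G' ⊔ edge x w).Adj w a := by
    simp [hG', edge_adj, hwa.ne', hxa.symm]
  obtain ⟨hacyc', hbridge⟩ := isAcyclic_sup_fromEdgeSet_iff.1 hacyc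
  refine hacyc'.sup_edge_of_not_reachable fun hya ↦ ?_
  have hxw' : (G' ⊔ edge x w).Adj x w := Or.inr (by simp [edge_adj, hne])
  have hwa' := hxw'.symm.reachable.trans ((hxy'.mono le_sup_left).trans hya)
  exact (hbridge hwa').elim hwa.ne hnadj

theorem deg_reroute [Fintype V] [DecidableEq V] (hxy : G.Reachable x y) (hwa : G.Adj w a)
    (hxw : ¬G.Reachable x w) :
    deg (reroute G x y w a) = deg G + Pi.single x 1 + Pi.single y 1 := by
  set G' := G.deleteEdges {s(w, a)} with hG'
  have hne : x ≠ w := fun h ↦ hxw (h ▸ .rfl)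
  have hya : ¬G.Reachable y a := fun h ↦ hxw (hxy.trans (h.trans hwa.symm.reachable))
  have hyw : ¬G.Reachable y w := fun h ↦ hxw (hxy.trans h)
  have hle : G' ≤ G := G.deleteEdges_le _
  have hadj : ¬(G' ⊔ edge x w).Adj y a := by
    rintro (h | h)
    · exact hya (hle h).reachable
    · rcases (edge_adj ..).1 h with ⟨⟨-, rfl⟩ | ⟨rfl, -⟩, -⟩
      exacts [hwa.ne rfl, hyw .rfl]
  have hne' : y ≠ a := fun h ↦ hya (h ▸ .rfl)
  rw [reroute, deg_sup_edge hne' hadj,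
    deg_sup_edge hne fun h ↦ hxw (hle h).reachable]
  conv_rhs => rw [← deleteEdges_sup_edge hwa, deg_sup_edge hwa.ne (by simp)]
  ac_rfl

end Forest

section Extension

variable {V : Type*}

theorem add_single_one_le_iff [DecidableEq V] {f g : V → ℕ} {x : V} :
    f + Pi.single x 1 ≤ g ↔ f ≤ g ∧ f x < g x := by
  refine ⟨fun h ↦ ⟨le_self_add.trans h, by simpa using h x⟩, fun ⟨hle, hx⟩ v ↦ ?_⟩
  rcases eq_or_ne v x with rfl | hv
  · simpa using hx
  · simpa [hv] using hle v

theorem lt_add_single_one_add_single_one [DecidableEq V] {f : V → ℕ} {x y : V} :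
    f < f + Pi.single x 1 + Pi.single y 1 :=
  (lt_add_of_pos_right f (Pi.single_pos.2 one_pos)).trans_le le_self_add

variable [Fintype V]

theorem exists_add_single_one_add_single_one_le_of_lt [DecidableEq V] {f g : V → ℕ} (h : f < g)
    (hf : Even (∑ v, f v)) (hg : Even (∑ v, g v)) :
    ∃ x y, f + Pi.single x 1 + Pi.single y 1 ≤ g := by
  obtain ⟨hle, x, hx⟩ := Pi.lt_def.1 h
  have hxle : f + Pi.single x 1 ≤ g := add_single_one_le_iff.2 ⟨hle, hx⟩
  have hne : f + Pi.single x 1 ≠ g := by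
    rintro rfl
    simp [Finset.sum_add_distrib, hf, parity_simps] at hg
  obtain ⟨-, y, hy⟩ := Pi.lt_def.1 (lt_of_le_of_ne hxle hne)
  exact ⟨x, y, add_single_one_le_iff.2 ⟨hxle, hy⟩⟩

theorem exists_not_reachable_of_sum_deg_add_two_lt {G : SimpleGraph V} (hG : G.IsAcyclic)
    (h : ∑ v, deg G v + 2 < 2 * Fintype.card V) (x : V) : ∃ z, ¬G.Reachable x z := by
  by_contra! hx
  exact h.ne (sum_deg_add_two_of_isTree
    ⟨(connected_iff_exists_forall_reachable G).2 ⟨x, hx⟩, hG⟩)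

variable {F G : SimpleGraph V} {e : V → ℕ}

theorem exists_adj_not_adj_of_deg_lt {w : V} (h : deg F w < deg G w) :
    ∃ a, G.Adj w a ∧ ¬F.Adj w a :=
  Set.exists_mem_notMem_of_ncard_lt_ncard h

theorem exists_isAcyclic_deg_lt_of_not_reachable (hFG : F ≤ G) (hG : G.IsAcyclic)
    (hGe : deg G ≤ e) {u v : V} (huv : ¬G.Reachable u v) (hu : deg G u < e u)
    (hv : deg G v < e v) : ∃ H, F ≤ H ∧ H.IsAcyclic ∧ deg H ≤ e ∧ deg G < deg H := by
  classical
  have hne : u ≠ v := fun h ↦ huv (h ▸ .rfl)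
  have hdeg := deg_sup_edge hne fun h ↦ huv h.reachable
  refine ⟨G ⊔ edge u v, hFG.trans le_sup_left, hG.sup_edge_of_not_reachable huv, ?_, ?_⟩
  · rw [hdeg, add_single_one_le_iff, add_single_one_le_iff]
    exact ⟨⟨hGe, hu⟩, by simpa [hne.symm] using hv⟩
  · rw [hdeg]
    exact lt_add_single_one_add_single_one

-- Two units of missing degree sit at `x` and `y`. They are joined to each other, or `x` to a
-- deficient vertex of another component, or, if that component is already saturated, both are
-- joined to the ends of one of its edges outside `F`, which is deleted.
theorem exists_isAcyclic_deg_lt (hF : ∀ v, ∃ w, F.Reachable v w ∧ deg F w < e w)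
    (heven : Even (∑ v, e v)) (hlt : ∑ v, e v < 2 * Fintype.card V) (hFG : F ≤ G)
    (hG : G.IsAcyclic) (hGe : deg G < e) :
    ∃ H, F ≤ H ∧ H.IsAcyclic ∧ deg H ≤ e ∧ deg G < deg H := by
  classical
  obtain ⟨x, y, hxy⟩ := exists_add_single_one_add_single_one_le_of_lt hGe (even_sum_deg G) heven
  have hx : deg G x < e x := (add_single_one_le_iff.1 (add_single_one_le_iff.1 hxy).1).2
  have hy : deg G y < e y :=
    (le_self_add (a := deg G y)).trans_lt (add_single_one_le_iff.1 hxy).2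
  by_cases hreach : G.Reachable x y
  swap
  · exact exists_isAcyclic_deg_lt_of_not_reachable hFG hG hGe.le hreach hx hy
  have hsum : ∑ v, deg G v + 2 < 2 * Fintype.card V := by
    refine lt_of_le_of_lt ?_ hlt
    simpa [Finset.sum_add_distrib, add_assoc] using
      Finset.sum_le_sum (s := univ) fun v _ ↦ hxy v
  obtain ⟨z, hxz⟩ := exists_not_reachable_of_sum_deg_add_two_lt hG hsum x
  obtain ⟨w, hzw, hw⟩ := hF z
  have hxw : ¬G.Reachable x w := fun h ↦ hxz (h.trans (hzw.mono hFG).symm)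
  rcases (hGe.le w).lt_or_eq with hGw | hGw
  · exact exists_isAcyclic_deg_lt_of_not_reachable hFG hG hGe.le hxw hx hGw
  obtain ⟨a, hwa, hFwa⟩ := exists_adj_not_adj_of_deg_lt (hGw ▸ hw)
  have hdeg := deg_reroute hreach hwa hxw
  exact ⟨reroute G x y w a, le_reroute hFG hFwa, isAcyclic_reroute hG hreach hwa hxw,
    hdeg ▸ hxy, hdeg ▸ lt_add_single_one_add_single_one⟩

theorem exists_isAcyclic_ge_deg_eq (hFacyc : F.IsAcyclic) (hFe : deg F ≤ e)
    (hF : ∀ v, ∃ w, F.Reachable v w ∧ deg F w < e w)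
    (heven : Even (∑ v, e v)) (hlt : ∑ v, e v < 2 * Fintype.card V) :
    ∃ G, F ≤ G ∧ G.IsAcyclic ∧ deg G = e := by
  classical
  obtain ⟨G, ⟨hFG, hG, hGe⟩, hmax⟩ := Set.Finite.exists_maximalFor deg
    {G | F ≤ G ∧ G.IsAcyclic ∧ deg G ≤ e} (Set.toFinite _) ⟨F, le_rfl, hFacyc, hFe⟩
  refine ⟨G, hFG, hG, by_contra fun hne ↦ ?_⟩
  obtain ⟨H, hFH, hH, hHe, hGH⟩ :=
    exists_isAcyclic_deg_lt hF heven hlt hFG hG (lt_of_le_of_ne hGe hne)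
  exact hGH.not_ge (hmax ⟨hFH, hH, hHe⟩ hGH.le)

end Extension

section Scaffold

variable {n k : ℕ}

/-- The forest on `Fin n` made of the `k` edges from `i < k` to `i + (n - k)` and of the path
through `k, k + 1, …, n - k - 1`; for `2 * k ≤ n` these are disjoint and cover all vertices. -/
def scaffold (n k : ℕ) : SimpleGraph (Fin n) :=
  fromRel fun i j ↦ (i : ℕ) < k ∧ (j : ℕ) = i + (n - k) ∨ k ≤ (i : ℕ) ∧ (i : ℕ) + 1 = j ∧ j < n - k

theorem scaffold_adj_iff (hk : 2 * k ≤ n) {i j : Fin n} : (scaffold n k).Adj i j ↔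
    (i : ℕ) < k ∧ (j : ℕ) = i + (n - k) ∨ (j : ℕ) < k ∧ (i : ℕ) = j + (n - k) ∨
      k ≤ (i : ℕ) ∧ (i : ℕ) + 1 = j ∧ j < n - k ∨ k ≤ (j : ℕ) ∧ (j : ℕ) + 1 = i ∧ i < n - k := by
  rw [scaffold, fromRel_adj, ne_eq, Fin.ext_iff]
  omega

theorem exists_scaffold_adj_of_sub_le (hk : 2 * k ≤ n) {v : Fin n} (hv : n - k ≤ (v : ℕ)) :
    ∃ w : Fin n, (w : ℕ) < k ∧ (v : ℕ) = w + (n - k) ∧ (scaffold n k).Adj v w := by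
  have hw : (v : ℕ) - (n - k) < k := by omega
  refine ⟨⟨v - (n - k), by omega⟩, hw, (Nat.sub_add_cancel hv).symm, (scaffold_adj_iff hk).2 ?_⟩
  exact Or.inr (Or.inl ⟨hw, (Nat.sub_add_cancel hv).symm⟩)

theorem isAcyclic_scaffold (hk : 2 * k ≤ n) : (scaffold n k).IsAcyclic := by
  refine isAcyclic_of_lower_adj_unique fun u v w huw hvw hu hv ↦ Fin.ext ?_
  rw [scaffold_adj_iff hk] at hu hv
  omega

theorem deg_scaffold_le_one (hk : 2 * k ≤ n) {v : Fin n}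
    (hv : (v : ℕ) ≤ k ∨ n - k ≤ (v : ℕ)) : deg (scaffold n k) v ≤ 1 := by
  refine (Set.ncard_le_one_iff (Set.toFinite _)).2
    fun {a b} (ha : (scaffold n k).Adj v a) (hb : (scaffold n k).Adj v b) ↦ Fin.ext ?_
  rw [scaffold_adj_iff hk] at ha hb
  omega

theorem deg_scaffold_le_two (hk : 2 * k ≤ n) {v : Fin n} (hkv : k ≤ (v : ℕ))
    (hv : (v : ℕ) < n - k) : deg (scaffold n k) v ≤ 2 := by
  refine (deg_le_card_of_forall_adj_mem Fin.val_injective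
    (t := {(v : ℕ) - 1, (v : ℕ) + 1}) fun u hu ↦ ?_).trans card_le_two
  rw [scaffold_adj_iff hk] at hu
  rw [mem_insert, mem_singleton]
  omega

/-- The path of `scaffold n k`, as an induced subgraph. -/
def scaffoldPath (n k : ℕ) : pathGraph (n - 2 * k) ↪g scaffold n k where
  toFun j := ⟨k + j, by omega⟩
  inj' i j h := by simpa [Fin.ext_iff] using h
  map_rel_iff' {i j} := by
    change (scaffold n k).Adj ⟨k + i, _⟩ ⟨k + j, _⟩ ↔ _
    have hk : 2 * k ≤ n := by have := i.isLt; omega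
    rw [scaffold_adj_iff hk, pathGraph_adj]
    dsimp only
    omega

theorem mem_range_scaffoldPath {v : Fin n} :
    v ∈ Set.range (scaffoldPath n k) ↔ k ≤ (v : ℕ) ∧ (v : ℕ) < n - k := by
  constructor
  · rintro ⟨j, rfl⟩
    change k ≤ k + j ∧ k + j < n - k
    omega
  · rintro ⟨h, h'⟩
    exact ⟨⟨v - k, by omega⟩, Fin.ext (Nat.add_sub_cancel' h)⟩

theorem reachable_scaffoldPath (i j : Fin (n - 2 * k)) :
    (scaffold n k).Reachable (scaffoldPath n k i) (scaffoldPath n k j) :=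
  (pathGraph_preconnected _ i j).map (scaffoldPath n k).toHom

end Scaffold

section Layered

theorem two_mul_card_add_card_filter_three_le {ι : Type*} (s : Finset ι) {d : ι → ℕ}
    (hpos : ∀ i ∈ s, 0 < d i) :
    2 * #s + #{i ∈ s | 3 ≤ d i} ≤ ∑ i ∈ s, d i + #{i ∈ s | d i = 1} := by
  have h : ∑ i ∈ s, (2 + if 3 ≤ d i then 1 else 0) ≤ ∑ i ∈ s, (d i + if d i = 1 then 1 else 0) :=
    sum_le_sum fun i hi ↦ by have := hpos i hi; split_ifs <;> omega
  simpa [sum_add_distrib, mul_comm] using h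

theorem card_filter_eq_one_add_card_filter_two_le {ι : Type*} (s : Finset ι) {d : ι → ℕ}
    (hpos : ∀ i ∈ s, 0 < d i) : #{i ∈ s | d i = 1} + #{i ∈ s | 2 ≤ d i} = #s := by
  rw [← card_filter_add_card_filter_not (s := s) (d · = 1)]
  congr 2
  refine filter_congr fun i hi ↦ ?_
  have := hpos i hi
  omega

/-- The sequence `d` consists of `k` entries at least `2`, followed by entries equal to `2`, and
ends with `k` entries equal to `1`: these are the degree functions to which `scaffold n k` is
extended. -/
structure IsLayered {n : ℕ} (k : ℕ) (d : Fin n → ℕ) : Prop where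
  two_mul_le : 2 * k ≤ n
  two_le : ∀ i : Fin n, (i : ℕ) < k → 2 ≤ d i
  eq_two : ∀ i : Fin n, k ≤ (i : ℕ) → (i : ℕ) < n - k → d i = 2
  eq_one : ∀ i : Fin n, n - k ≤ (i : ℕ) → d i = 1

variable {n k : ℕ} {d : Fin n → ℕ}

theorem isLayered_of_antitone (hmono : Antitone d) (hpos : ∀ i, 0 < d i)
    (hsum : ∑ i, d i < 2 * n) (h12 : #{i | d i = 1} ≤ #{i | 2 ≤ d i}) :
    IsLayered #{i | d i = 1} d := by
  have hcard := card_filter_eq_one_add_card_filter_two_le univ fun i _ ↦ hpos i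
  have hthree := two_mul_card_add_card_filter_three_le univ fun i _ ↦ hpos i
  rw [card_fin] at hcard hthree
  have two_le_iff (i : Fin n) : (i : ℕ) < #{i | 2 ≤ d i} ↔ 2 ≤ d i :=
    Tuple.lt_card_ge_iff_apply_ge_of_antitone hmono
  have three_le_iff (i : Fin n) : (i : ℕ) < #{i | 3 ≤ d i} ↔ 3 ≤ d i :=
    Tuple.lt_card_ge_iff_apply_ge_of_antitone hmono
  refine ⟨by omega, fun i hi ↦ ?_, fun i hki hi ↦ ?_, fun i hi ↦ ?_⟩
  · exact (two_le_iff i).1 (by omega)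
  · have := two_le_iff i
    have := three_le_iff i
    omega
  · have := two_le_iff i
    have := hpos i
    omega

namespace IsLayered

theorem eq_one_iff (hd : IsLayered k d) {i : Fin n} : d i = 1 ↔ n - k ≤ (i : ℕ) := by
  refine ⟨fun h ↦ ?_, hd.eq_one i⟩
  have := hd.two_le i
  have := hd.eq_two i
  omega

theorem deg_scaffold_le (hd : IsLayered k d) : deg (scaffold n k) ≤ d := by
  intro v
  rcases lt_or_ge (v : ℕ) k with hk | hk
  · exact (deg_scaffold_le_one hd.two_mul_le (Or.inl hk.le)).trans
      (one_le_two.trans (hd.two_le v hk))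
  rcases lt_or_ge (v : ℕ) (n - k) with hv | hv
  · exact (deg_scaffold_le_two hd.two_mul_le hk hv).trans (hd.eq_two v hk hv).ge
  · exact (deg_scaffold_le_one hd.two_mul_le (Or.inr hv)).trans (hd.eq_one v hv).ge

theorem exists_reachable_deg_scaffold_lt (hd : IsLayered k d) (v : Fin n) :
    ∃ w, (scaffold n k).Reachable v w ∧ deg (scaffold n k) w < d w := by
  have hk := hd.two_mul_le
  have lt_of_le {w : Fin n} (hw : (w : ℕ) ≤ k) (h2 : 2 ≤ d w) : deg (scaffold n k) w < d w :=
    (deg_scaffold_le_one hk (Or.inl hw)).trans_lt h2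
  by_cases hpath : v ∈ Set.range (scaffoldPath n k)
  · obtain ⟨j, rfl⟩ := hpath
    let i : Fin (n - 2 * k) := ⟨0, j.pos⟩
    obtain ⟨hki, hi⟩ := mem_range_scaffoldPath.1 ⟨i, rfl⟩
    exact ⟨scaffoldPath n k i, reachable_scaffoldPath j i,
      lt_of_le le_rfl (hd.eq_two _ hki hi).ge⟩
  rw [mem_range_scaffoldPath] at hpath
  rcases lt_or_ge (v : ℕ) k with hv | hv
  · exact ⟨v, .rfl, lt_of_le hv.le (hd.two_le v hv)⟩
  · obtain ⟨w, hw, -, hadj⟩ := exists_scaffold_adj_of_sub_le hk (v := v) (by omega)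
    exact ⟨w, hadj.reachable, lt_of_le hw.le (hd.two_le w hw)⟩

theorem exists_isAcyclic_deg_eq (hd : IsLayered k d) (heven : Even (∑ i, d i))
    (hlt : ∑ i, d i < 2 * n) :
    ∃ G, scaffold n k ≤ G ∧ G.IsAcyclic ∧ deg G = d :=
  exists_isAcyclic_ge_deg_eq (isAcyclic_scaffold hd.two_mul_le) hd.deg_scaffold_le
    hd.exists_reachable_deg_scaffold_lt heven (by rwa [Fintype.card_fin])

variable {G : SimpleGraph (Fin n)}

theorem adj_and_deg_eq_one_iff (hd : IsLayered k d) (hG : scaffold n k ≤ G) (hdeg : deg G = d)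
    {v u : Fin n} : G.Adj v u ∧ deg G u = 1 ↔ (v : ℕ) < k ∧ (u : ℕ) = v + (n - k) := by
  have hk := hd.two_mul_le
  rw [hdeg, hd.eq_one_iff]
  constructor
  · rintro ⟨hadj, hu⟩
    obtain ⟨w, hwk, huw, hw⟩ := exists_scaffold_adj_of_sub_le hk hu
    have hvw := (adj_iff_eq_of_deg_eq_one (by rw [hdeg, hd.eq_one u hu]) (hG hw)).1 hadj.symm
    exact hvw ▸ ⟨hwk, huw⟩
  · rintro ⟨hv, hu⟩
    exact ⟨hG ((scaffold_adj_iff hk).2 (Or.inl ⟨hv, hu⟩)), by omega⟩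

theorem isSupport_iff (hd : IsLayered k d) (hG : scaffold n k ≤ G) (hdeg : deg G = d)
    {v : Fin n} : IsSupport G v ↔ (v : ℕ) < k := by
  have hk := hd.two_mul_le
  simp only [IsSupport, hd.adj_and_deg_eq_one_iff hG hdeg]
  exact ⟨fun ⟨_, _, hv, _⟩ ↦ hv,
    fun hv ↦ ⟨hdeg ▸ hd.two_le v hv, ⟨v + (n - k), by omega⟩, hv, rfl⟩⟩

theorem ncard_setOf_isSupport (hd : IsLayered k d) (hG : scaffold n k ≤ G) (hdeg : deg G = d) :
    {v | IsSupport G v}.ncard = k := by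
  have hk := hd.two_mul_le
  simp only [hd.isSupport_iff hG hdeg]
  rw [← coe_filter_univ, Set.ncard_coe_finset, Fin.card_filter_val_lt]
  omega

theorem ncard_setOf_adj_and_deg_eq_one (hd : IsLayered k d) (hG : scaffold n k ≤ G)
    (hdeg : deg G = d) {v : Fin n} (hv : IsSupport G v) :
    {u | G.Adj v u ∧ deg G u = 1}.ncard = 1 := by
  have hk := hd.two_mul_le
  rw [hd.isSupport_iff hG hdeg] at hv
  refine Set.ncard_eq_one.2 ⟨⟨v + (n - k), by omega⟩, Set.ext fun u ↦ ?_⟩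
  simp [hd.adj_and_deg_eq_one_iff hG hdeg, hv, Fin.ext_iff]

theorem setOf_two_le_deg_and_not_isSupport (hd : IsLayered k d) (hG : scaffold n k ≤ G)
    (hdeg : deg G = d) :
    {v | 2 ≤ deg G v ∧ ¬IsSupport G v} = Set.range (scaffoldPath n k) := by
  ext v
  rw [mem_range_scaffoldPath, Set.mem_ofPred_eq, hd.isSupport_iff hG hdeg, hdeg]
  have := hd.eq_one v
  have := hd.eq_two v
  omega

end IsLayered

theorem nonempty_induce_range_scaffoldPath_iso {G : SimpleGraph (Fin n)} (hG : G.IsAcyclic)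
    (hle : scaffold n k ≤ G) :
    Nonempty (G.induce (Set.range (scaffoldPath n k)) ≃g pathGraph (n - 2 * k)) := by
  let f : pathGraph (n - 2 * k) ↪g G :=
    { toEmbedding := (scaffoldPath n k).toEmbedding
      map_rel_iff' {i j} := (adj_iff_of_le_isAcyclic hG hle (reachable_scaffoldPath i j)).trans
        (scaffoldPath n k).map_adj_iff }
  exact ⟨f.isoInduceRange.symm⟩

end Layered

theorem stmt_7 (n c : ℕ) (hc : 0 < c) (d : Fin n → ℕ) (hmono : Antitone d)
    (hpos : ∀ i, 0 < d i) (hsum : ∑ i, d i = 2 * n - 2 * c)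
    (h12 : (Finset.univ.filter fun i => d i = 1).card ≤ (Finset.univ.filter fun i => 2 ≤ d i).card)
    (h1 : 0 < (Finset.univ.filter fun i => d i = 1).card) :
    ∃ G : SimpleGraph (Fin n), G.IsAcyclic ∧
      degSeq G = Finset.univ.val.map d ∧
      {v | IsSupport G v}.ncard = (Finset.univ.filter fun i => d i = 1).card ∧
      (∀ v, IsSupport G v → {u | G.Adj v u ∧ deg G u = 1}.ncard = 1) ∧
      (∀ v, 2 ≤ deg G v → ¬ IsSupport G v → deg G v = 2) ∧
      Nonempty ((G.induce {v | 2 ≤ deg G v ∧ ¬ IsSupport G v}) ≃g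
        pathGraph (n - 2 * (Finset.univ.filter fun i => d i = 1).card)) := by
  have hn : 0 < n := h1.trans_le (card_finset_fin_le _)
  have hlt : ∑ i, d i < 2 * n := by omega
  have heven : Even (∑ i, d i) := by rw [hsum, ← Nat.mul_sub]; exact even_two_mul _
  have hd := isLayered_of_antitone hmono hpos hlt h12
  obtain ⟨G, hle, hG, hdeg⟩ := hd.exists_isAcyclic_deg_eq heven hlt
  have hpath := hd.setOf_two_le_deg_and_not_isSupport hle hdeg
  refine ⟨G, hG, by rw [degSeq, hdeg], hd.ncard_setOf_isSupport hle hdeg,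
    fun v ↦ hd.ncard_setOf_adj_and_deg_eq_one hle hdeg, fun v h2 hv ↦ ?_, ?_⟩
  · obtain ⟨hkv, hvk⟩ := mem_range_scaffoldPath.1 (hpath.le ⟨h2, hv⟩)
    rw [hdeg, hd.eq_two v hkv hvk]
  · rw [hpath]
    exact nonempty_induce_range_scaffoldPath_iso hG hle
end

section
/- Let d = (d_1,...,d_n) be a non-increasing sequence of positive integers with d_1 ≥ 2 and ∑ d_i = 2n - 2c for a positive integer c. If n_1(d) ≤ n_{≥2}(d), then the maximum of the domination number γ(F) over all forests F with degree sequence d equals ⌈(n + n_1(d) - 2)/3⌉. -/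
open SimpleGraph Finset

/-!
Upper bound: root every component of the forest at a leaf and colour the vertices by their distance
to the root modulo 3. A vertex that is not a leaf sees all three colours in its closed neighbourhood
and a leaf sees two, so the three colour classes, each enlarged by the leaves that miss its colour,
are dominating sets of total size `n + n₁`. Hence `γ ≤ ⌊(n + n₁) / 3⌋ = ⌈(n + n₁ - 2) / 3⌉`.

Lower bound: as `n₁ ≤ n_{≥2}`, one can choose `n₁` entries that include all entries `≥ 3` and whose
other members are equal to 2. Lowered by one, they are the degrees of a forest; attaching a leaf to
each of its vertices gives a forest with domination number `n₁`. The remaining `n - 2 n₁` entries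
are equal to 2 and are realised by lengthening one pendant path: every three new vertices raise the
domination number by one.
-/

section Domination

variable {V W : Type*}

/-- The closed neighbourhood `N[v]` of `v`: the vertex itself together with its neighbours. -/
def closedNeighborSet (G : SimpleGraph V) (v : V) : Set V :=
  insert v (G.neighborSet v)

lemma isDomSet_iff_forall_inter_nonempty {G : SimpleGraph V} {D : Set V} :
    IsDomSet G D ↔ ∀ v, (D ∩ closedNeighborSet G v).Nonempty := by
  refine forall_congr' fun v => ⟨fun h => ?_, fun ⟨u, huD, hu⟩ hv => ?_⟩
  · by_cases hv : v ∈ D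
    · exact ⟨v, hv, Set.mem_insert v _⟩
    · obtain ⟨u, huD, huv⟩ := h hv
      exact ⟨u, huD, Or.inr huv.symm⟩
  · rcases hu with rfl | hvu
    · exact absurd huD hv
    · exact ⟨u, huD, hvu.symm⟩

lemma IsDomSet.image_sdiff {G : SimpleGraph V} {H : SimpleGraph W} {D s : Set V} {φ : V → W}
    (hD : IsDomSet G D) (h : ∀ w, ∃ v, Disjoint (closedNeighborSet G v) s ∧
      Set.MapsTo φ (closedNeighborSet G v) (closedNeighborSet H w)) :
    IsDomSet H (φ '' (D \ s)) := by
  refine isDomSet_iff_forall_inter_nonempty.mpr fun w => ?_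
  obtain ⟨v, hdisj, hmaps⟩ := h w
  obtain ⟨u, huD, huv⟩ := isDomSet_iff_forall_inter_nonempty.mp hD v
  exact ⟨φ u, Set.mem_image_of_mem φ ⟨huD, hdisj.notMem_of_mem_left huv⟩, hmaps huv⟩

variable [Fintype V] [Fintype W]

lemma domNum_le_ncard {G : SimpleGraph V} {D : Set V} (hD : IsDomSet G D) :
    domNum G ≤ D.ncard :=
  Nat.sInf_le ⟨D, hD, rfl⟩

lemma exists_isDomSet_ncard_eq_domNum (G : SimpleGraph V) :
    ∃ D : Set V, IsDomSet G D ∧ D.ncard = domNum G :=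
  Nat.sInf_mem (s := {k | ∃ D : Set V, IsDomSet G D ∧ D.ncard = k})
    ⟨_, Set.univ, fun v hv => absurd (Set.mem_univ v) hv, rfl⟩

lemma domNum_le_of_mapsTo {G : SimpleGraph V} {H : SimpleGraph W} (φ : V → W)
    (h : ∀ w, ∃ v, Set.MapsTo φ (closedNeighborSet G v) (closedNeighborSet H w)) :
    domNum H ≤ domNum G := by
  obtain ⟨D, hD, hcard⟩ := exists_isDomSet_ncard_eq_domNum G
  have hdom : IsDomSet H (φ '' (D \ ∅)) := hD.image_sdiff (by simpa using h)
  calc domNum H ≤ (φ '' (D \ ∅)).ncard := domNum_le_ncard hdom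
    _ ≤ D.ncard := by simpa using Set.ncard_image_le (f := φ) D.toFinite
    _ = domNum G := hcard

lemma domNum_lt_of_mapsTo {G : SimpleGraph V} {H : SimpleGraph W} (φ : V → W) (z : V)
    (h : ∀ w, ∃ v, Disjoint (closedNeighborSet G v) (closedNeighborSet G z) ∧
      Set.MapsTo φ (closedNeighborSet G v) (closedNeighborSet H w)) :
    domNum H < domNum G := by
  obtain ⟨D, hD, hcard⟩ := exists_isDomSet_ncard_eq_domNum G
  have hssub : D \ closedNeighborSet G z ⊂ D := by
    obtain ⟨u, huD, huz⟩ := isDomSet_iff_forall_inter_nonempty.mp hD z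
    exact Set.sdiff_subset.ssubset_of_mem_notMem huD fun hu => hu.2 huz
  calc domNum H ≤ (φ '' (D \ closedNeighborSet G z)).ncard := domNum_le_ncard (hD.image_sdiff h)
    _ ≤ (D \ closedNeighborSet G z).ncard := Set.ncard_image_le (Set.toFinite _)
    _ < D.ncard := Set.ncard_lt_ncard hssub D.toFinite
    _ = domNum G := hcard

lemma domNum_bot : domNum (⊥ : SimpleGraph V) = Fintype.card V := by
  obtain ⟨D, hD, hcard⟩ := exists_isDomSet_ncard_eq_domNum (⊥ : SimpleGraph V)
  have hDuniv : D = Set.univ := Set.eq_univ_of_forall fun v => by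
    by_contra hv
    obtain ⟨u, -, huv⟩ := hD v hv
    exact huv
  rw [← hcard, hDuniv, Set.ncard_univ, Nat.card_eq_fintype_card]

-- The vertices of colour `i`, together with those that miss `i` in their closed neighbourhood,
-- dominate; a vertex lies in one such set for its own colour and one for each colour it misses.
lemma card_mul_domNum_le {κ : Type*} [Fintype κ] (G : SimpleGraph V) (f : V → κ) :
    Fintype.card κ * domNum G ≤ Fintype.card V + ∑ v, (f '' closedNeighborSet G v)ᶜ.ncard := by
  classical
  let D (i : κ) : Finset V := {v | f v = i ∨ i ∉ f '' closedNeighborSet G v}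
  have hdom (i : κ) : IsDomSet G (D i : Set V) := by
    refine isDomSet_iff_forall_inter_nonempty.mpr fun v => ?_
    by_cases hi : i ∈ f '' closedNeighborSet G v
    · obtain ⟨u, hu, hui⟩ := hi
      exact ⟨u, by simp [D, hui], hu⟩
    · exact ⟨v, mem_coe.mpr (by rw [mem_filter_univ]; exact Or.inr hi), Set.mem_insert v _⟩
  have hcount (v : V) : #{i | v ∈ D i} ≤ 1 + (f '' closedNeighborSet G v)ᶜ.ncard := by
    have hsub : ({i | v ∈ D i} : Finset κ) =
        insert (f v) (f '' closedNeighborSet G v)ᶜ.toFinset := by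
      ext i
      simp [D, eq_comm]
    rw [hsub, Set.ncard_eq_toFinset_card', add_comm]
    exact card_insert_le _ _
  calc Fintype.card κ * domNum G = ∑ _i : κ, domNum G := by simp
    _ ≤ ∑ i, #(D i) := sum_le_sum fun i _ => by simpa using domNum_le_ncard (hdom i)
    _ = ∑ v, #{i | v ∈ D i} := by
      simpa [bipartiteAbove, bipartiteBelow] using
        sum_card_bipartiteAbove_eq_sum_card_bipartiteBelow (s := univ) (t := univ)
          fun i v => v ∈ D i
    _ ≤ ∑ v, (1 + (f '' closedNeighborSet G v)ᶜ.ncard) := sum_le_sum fun v _ => hcount v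
    _ = _ := by simp [sum_add_distrib]

end Domination

section ForestColoring

variable {V : Type*} {G : SimpleGraph V}

lemma exists_subsingleton_neighborSet_of_isAcyclic [Finite V] (hG : G.IsAcyclic)
    (c : G.ConnectedComponent) :
    ∃ r, G.connectedComponentMk r = c ∧ (G.neighborSet r).Subsingleton := by
  have hc : Nonempty c.supp := c.nonempty_supp.to_subtype
  obtain ⟨u, r, p, hp, hmax⟩ :=
    Walk.exists_isPath_forall_isPath_length_le_length (G.induce c.supp)
  have hpen (w : c.supp) (hrw : (G.induce c.supp).Adj r w) : w = p.penultimate := by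
    refine (hG.induce c.supp).eq_penultimate_of_adj_end hp hrw ?_
    by_contra hw
    have := hmax _ _ _ (hp.concat hw hrw)
    grind [Walk.length_concat]
  have hmem (w : V) (hrw : G.Adj r w) : w ∈ c.supp :=
    (ConnectedComponent.connectedComponentMk_eq_of_adj hrw).symm.trans r.2
  refine ⟨r, r.2, fun a ha b hb => ?_⟩
  exact congrArg Subtype.val ((hpen ⟨a, hmem a ha⟩ ha).trans (hpen ⟨b, hmem b hb⟩ hb).symm)

lemma exists_adj_dist_eq_and_exists_adj_dist_eq (hG : G.IsAcyclic) {r v : V}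
    (hrv : G.Reachable r v) (hne : r ≠ v) (hv : (G.neighborSet v).Nontrivial) :
    (∃ y, G.Adj v y ∧ G.dist r y + 1 = G.dist r v) ∧
      ∃ x, G.Adj v x ∧ G.dist r x = G.dist r v + 1 := by
  obtain ⟨p, hp, hlen⟩ := hrv.exists_path_of_dist
  have hpnil : ¬p.Nil := Walk.not_nil_of_ne hne
  constructor
  · refine ⟨p.penultimate, (p.adj_penultimate hpnil).symm, ?_⟩
    have hle : G.dist r p.penultimate ≤ p.dropLast.length := dist_le _
    have := hG.dist_eq_dist_add_one_of_adj_of_reachable r (p.adj_penultimate hpnil).symm hrv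
    grind [Walk.length_dropLast_add_one]
  · obtain ⟨x, (hvx : G.Adj v x), hx⟩ := hv.exists_ne p.penultimate
    have hxp : x ∉ p.support := fun h => hx (hG.eq_penultimate_of_adj_end hp hvx h)
    obtain ⟨q, hq, hqlen⟩ := (hrv.trans hvx.reachable).exists_path_of_dist
    have hqp : q = p.concat hvx := hG.path_concat hp hq hvx
      (hG.mem_support_of_ne_mem_support_of_adj_of_isPath hq hp hvx.symm hxp)
    exact ⟨x, hvx, by rw [← hqlen, hqp, Walk.length_concat, hlen]⟩

lemma exists_coloring_image_closedNeighborSet_eq_univ [Finite V] (hG : G.IsAcyclic) :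
    ∃ f : G.Coloring (ZMod 3), ∀ v, (G.neighborSet v).Nontrivial →
      f '' closedNeighborSet G v = Set.univ := by
  choose root hroot hsub using exists_subsingleton_neighborSet_of_isAcyclic hG
  let r (v : V) : V := root (G.connectedComponentMk v)
  have hreach (v : V) : G.Reachable (r v) v := ConnectedComponent.exact (hroot _)
  have hr {v w : V} (hvw : G.Adj v w) : r w = r v := by
    simp only [r, ConnectedComponent.connectedComponentMk_eq_of_adj hvw]
  let f (v : V) : ZMod 3 := G.dist (r v) v
  have hproper {v w : V} (hvw : G.Adj v w) : f v ≠ f w := by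
    have hsucc : ∀ a : ZMod 3, a + 1 ≠ a := by decide
    simp only [f, hr hvw]
    rcases hG.dist_eq_dist_add_one_of_adj_of_reachable (r v) hvw (hreach v) with h | h <;>
      rw [h, Nat.cast_add_one]
    exacts [hsucc _, (hsucc _).symm]
  refine ⟨Coloring.mk f hproper, fun v hv => Set.eq_univ_of_forall fun i => ?_⟩
  have hrv : r v ≠ v := fun h => Set.not_subsingleton_iff.mpr hv (h ▸ hsub _)
  obtain ⟨⟨y, hvy, hy⟩, x, hvx, hx⟩ :=
    exists_adj_dist_eq_and_exists_adj_dist_eq hG (hreach v) hrv hv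
  have hfx : f x = f v + 1 := by simp only [f, hr hvx, hx, Nat.cast_add_one]
  have hfy : f v = f y + 1 := by simp only [f, hr hvy, ← hy, Nat.cast_add_one]
  have hcases : ∀ a b i : ZMod 3, a = b + 1 → i = a ∨ i = a + 1 ∨ i = b := by decide
  rcases hcases _ _ i hfy with rfl | rfl | rfl
  · exact ⟨v, Set.mem_insert v _, rfl⟩
  · exact ⟨x, Or.inr hvx, hfx⟩
  · exact ⟨y, Or.inr hvy, rfl⟩

lemma deg_eq_ncard_neighborSet [Fintype V] (G : SimpleGraph V) (v : V) :
    deg G v = (G.neighborSet v).ncard :=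
  rfl

lemma three_mul_domNum_le_card_add_card_leaves [Fintype V] (hG : G.IsAcyclic)
    (hpos : ∀ v, 0 < deg G v) :
    3 * domNum G ≤ Fintype.card V + #{v | deg G v = 1} := by
  obtain ⟨f, hf⟩ := exists_coloring_image_closedNeighborSet_eq_univ hG
  have hmissed (v : V) :
      (f '' closedNeighborSet G v)ᶜ.ncard ≤ if deg G v = 1 then 1 else 0 := by
    split_ifs with hv
    · obtain ⟨u, hvu⟩ : (G.neighborSet v).Nonempty := by
        rw [← Set.ncard_pos, ← deg_eq_ncard_neighborSet]
        exact hpos v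
      have hpair : {f v, f u} ⊆ f '' closedNeighborSet G v := by
        rintro _ (rfl | rfl)
        exacts [Set.mem_image_of_mem f (Or.inl rfl), Set.mem_image_of_mem f (Or.inr hvu)]
      have hadd := Set.ncard_add_ncard_compl ({f v, f u} : Set (ZMod 3))
      rw [Set.ncard_pair (f.valid hvu), Nat.card_zmod] at hadd
      have hle := Set.ncard_le_ncard (Set.compl_subset_compl.mpr hpair)
      omega
    · have hnontrivial : (G.neighborSet v).Nontrivial := by
        rw [← Set.one_lt_ncard_iff_nontrivial, ← deg_eq_ncard_neighborSet]
        have := hpos v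
        omega
      simp [hf v hnontrivial]
  calc 3 * domNum G ≤ Fintype.card V + ∑ v, (f '' closedNeighborSet G v)ᶜ.ncard := by
        simpa only [ZMod.card] using card_mul_domNum_le G f
    _ ≤ Fintype.card V + ∑ v, if deg G v = 1 then 1 else 0 := by
        gcongr with v
        exact hmissed v
    _ = Fintype.card V + #{v | deg G v = 1} := by rw [card_filter]

end ForestColoring

section AttachLeaves

variable {V W ι : Type*}

lemma isAcyclic_of_comap_of_subsingleton_neighborSet {H : SimpleGraph W} (f : V ↪ W)
    (hf : (H.comap f).IsAcyclic)
    (hsub : ∀ w ∉ Set.range f, (H.neighborSet w).Subsingleton) : H.IsAcyclic := by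
  classical
  intro u c hc
  have hsupp (w : W) (hw : w ∈ c.support) : w ∈ Set.range f := by
    by_contra hwf
    have hrot : (c.rotate w hw).IsCycle := hc.rotate hw
    exact hrot.snd_ne_penultimate (hsub w hwf ((c.rotate w hw).adj_snd hrot.not_nil)
      ((c.rotate w hw).adj_penultimate hrot.not_nil).symm)
  have hinduce : (H.induce (Set.range f)).IsAcyclic := by
    let e := (Equiv.ofInjective f f.injective).symm
    refine hf.comap ⟨e, fun {x y} hxy => ?_⟩ e.injective
    simpa [e, Equiv.apply_ofInjective_symm] using hxy
  refine hinduce (c.induce _ hsupp) (Walk.IsCycle.of_map (f := (Embedding.induce _).toHom) ?_)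
  rwa [Walk.map_induce]

/-- The graph obtained from `G` by attaching, for every `i : ι`, a new leaf `Sum.inr i` to the
vertex `h i`. A single new leaf is the case `ι = Unit`, and `h = id` gives the corona of `G`. -/
def attachLeaves (G : SimpleGraph V) (h : ι → V) : SimpleGraph (V ⊕ ι) where
  Adj
    | .inl u, .inl v => G.Adj u v
    | .inl v, .inr i => h i = v
    | .inr i, .inl v => h i = v
    | .inr _, .inr _ => False
  symm := ⟨fun
    | .inl _, .inl _, huv => G.adj_symm huv
    | .inl _, .inr _, hvi => hvi
    | .inr _, .inl _, hvi => hvi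
    | .inr _, .inr _, hij => hij⟩
  loopless := ⟨fun
    | .inl v, hvv => G.irrefl (v := v) hvv
    | .inr _, hii => hii⟩

variable {G : SimpleGraph V} {h : ι → V}

@[simp] lemma attachLeaves_adj_inl_inl {u v : V} :
    (attachLeaves G h).Adj (.inl u) (.inl v) ↔ G.Adj u v := Iff.rfl

@[simp] lemma attachLeaves_adj_inl_inr {v : V} {i : ι} :
    (attachLeaves G h).Adj (.inl v) (.inr i) ↔ h i = v := Iff.rfl

@[simp] lemma attachLeaves_adj_inr_inl {v : V} {i : ι} :
    (attachLeaves G h).Adj (.inr i) (.inl v) ↔ h i = v := Iff.rfl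

@[simp] lemma attachLeaves_adj_inr_inr {i j : ι} :
    ¬(attachLeaves G h).Adj (.inr i) (.inr j) := id

lemma neighborSet_attachLeaves_inl (v : V) :
    (attachLeaves G h).neighborSet (.inl v) = .inl '' G.neighborSet v ∪ .inr '' (h ⁻¹' {v}) := by
  ext (u | i) <;> simp

lemma neighborSet_attachLeaves_inr (i : ι) :
    (attachLeaves G h).neighborSet (.inr i) = {.inl (h i)} := by
  ext (u | j) <;> simp [eq_comm]

lemma isAcyclic_attachLeaves (hG : G.IsAcyclic) (h : ι → V) : (attachLeaves G h).IsAcyclic := by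
  refine isAcyclic_of_comap_of_subsingleton_neighborSet .inl hG ?_
  rintro (v | i) hv
  · exact absurd (Set.mem_range_self v) hv
  · rw [neighborSet_attachLeaves_inr]
    exact Set.subsingleton_singleton

variable [Fintype V] [Fintype ι]

lemma deg_attachLeaves_inl (G : SimpleGraph V) (h : ι → V) (v : V) :
    deg (attachLeaves G h) (.inl v) = deg G v + (h ⁻¹' {v}).ncard := by
  have hdisj : Disjoint (Sum.inl '' G.neighborSet v) (Sum.inr '' (h ⁻¹' {v})) :=
    Set.disjoint_image_inl_image_inr
  rw [deg_eq_ncard_neighborSet, neighborSet_attachLeaves_inl, Set.ncard_union_eq hdisj,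
    Set.ncard_image_of_injective _ Sum.inl_injective,
    Set.ncard_image_of_injective _ Sum.inr_injective, deg_eq_ncard_neighborSet]

lemma deg_attachLeaves_inr (G : SimpleGraph V) (h : ι → V) (i : ι) :
    deg (attachLeaves G h) (.inr i) = 1 := by
  rw [deg_eq_ncard_neighborSet, neighborSet_attachLeaves_inr, Set.ncard_singleton]

lemma degSeq_attachLeaves (G : SimpleGraph V) (h : ι → V) :
    degSeq (attachLeaves G h) = univ.val.map (fun v => deg G v + (h ⁻¹' {v}).ncard) +
      Multiset.replicate (Fintype.card ι) 1 := by
  rw [degSeq, ← univ_disjSum_univ, val_disjSum, Multiset.disjSum, Multiset.map_add,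
    Multiset.map_map, Multiset.map_map]
  simp only [Function.comp_def, deg_attachLeaves_inl, deg_attachLeaves_inr, Multiset.map_const',
    card_val, card_univ]

lemma degSeq_attachLeaves_id (G : SimpleGraph V) :
    degSeq (attachLeaves G id) =
      (degSeq G).map (· + 1) + Multiset.replicate (Fintype.card V) 1 := by
  rw [degSeq_attachLeaves, degSeq, Multiset.map_map]
  simp

lemma domNum_le_domNum_attachLeaves (G : SimpleGraph V) (h : ι → V) :
    domNum G ≤ domNum (attachLeaves G h) := by
  refine domNum_le_of_mapsTo (Sum.elim id h) fun v => ⟨.inl v, ?_⟩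
  rintro (u | i) hu <;> simp_all [closedNeighborSet]

lemma card_le_domNum_attachLeaves_of_surjective (hh : Function.Surjective h) :
    Fintype.card V ≤ domNum (attachLeaves G h) := by
  rw [← domNum_bot (V := V)]
  refine domNum_le_of_mapsTo (Sum.elim id h) fun v => ?_
  obtain ⟨i, rfl⟩ := hh v
  refine ⟨.inr i, ?_⟩
  rintro (u | j) hu <;> simp_all [closedNeighborSet]

/-- The graph obtained from `G` by attaching a new leaf `Sum.inr ()` to `v`. -/
abbrev attachLeaf (G : SimpleGraph V) (v : V) : SimpleGraph (V ⊕ Unit) :=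
  attachLeaves G fun _ => v

lemma degSeq_attachLeaf {v : V} {M : Multiset ℕ} (hG : degSeq G = deg G v ::ₘ M) :
    degSeq (attachLeaf G v) = 1 ::ₘ (deg G v + 1) ::ₘ M := by
  classical
  have huniv : (univ : Finset V).val = v ::ₘ (univ.erase v).val := by
    rw [erase_val, Multiset.cons_erase (mem_univ_val v)]
  have hM : (univ.erase v).val.map (deg G) = M := by
    rwa [degSeq, huniv, Multiset.map_cons, Multiset.cons_inj_right] at hG
  have hrest : (univ.erase v).val.map (fun u => deg G u + ((fun _ : Unit => v) ⁻¹' {u}).ncard) =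
      M := by
    rw [← hM]
    refine Multiset.map_congr rfl fun u hu => ?_
    simp [Set.preimage_const_of_notMem, (ne_of_mem_erase hu).symm]
  rw [degSeq_attachLeaves, huniv, Multiset.map_cons, hrest, Fintype.card_unit,
    Multiset.replicate_one, add_comm, Multiset.singleton_add]
  simp

/-- The graph obtained from `G` by attaching a path with three vertices, by one of its ends, to
`v`. The other end of the path is the vertex `Sum.inr ()`. -/
abbrev attachPathThree (G : SimpleGraph V) (v : V) : SimpleGraph (((V ⊕ Unit) ⊕ Unit) ⊕ Unit) :=
  attachLeaf (attachLeaf (attachLeaf G v) (.inr ())) (.inr ())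

-- A dominating set meets the last two vertices of the path, and its other vertices still dominate
-- `G` once the path is collapsed onto `v`.
lemma domNum_lt_domNum_attachPathThree (G : SimpleGraph V) (v : V) :
    domNum G < domNum (attachPathThree G v) := by
  let collapse := Sum.elim (Sum.elim (Sum.elim id fun _ : Unit => v) fun _ : Unit => v)
    fun _ : Unit => v
  refine domNum_lt_of_mapsTo collapse (.inr ()) fun w => ⟨.inl (.inl (.inl w)), ?_, ?_⟩
  · rw [Set.disjoint_left]
    rintro (((u | _) | _) | _) hu <;> simp_all [closedNeighborSet]
  · rintro (((u | _) | _) | _) hu <;> simp_all [collapse, closedNeighborSet]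

end AttachLeaves

section Realization

/-- Some forest with degree sequence `D` has domination number at least `k`. The vertex type is
arbitrary here, so that forests can be built by attaching new vertices; it is fixed only in
`IsForestRealizable.exists_graph`. -/
def IsForestRealizable (D : Multiset ℕ) (k : ℕ) : Prop :=
  ∃ (V : Type) (_ : Fintype V) (G : SimpleGraph V),
    G.IsAcyclic ∧ degSeq G = D ∧ k ≤ domNum G

variable {D M : Multiset ℕ} {k x : ℕ}

lemma exists_deg_eq_of_mem_degSeq {V : Type*} [Fintype V] {G : SimpleGraph V}
    (hx : x ∈ degSeq G) : ∃ v, deg G v = x := by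
  simpa [degSeq] using hx

lemma card_degSeq {V : Type*} [Fintype V] (G : SimpleGraph V) :
    (degSeq G).card = Fintype.card V := by
  simp [degSeq]

lemma IsForestRealizable.cons_one_cons_succ (h : IsForestRealizable (x ::ₘ M) k) :
    IsForestRealizable (1 ::ₘ (x + 1) ::ₘ M) k := by
  obtain ⟨V, _, G, hG, hdeg, hk⟩ := h
  obtain ⟨v, rfl⟩ := exists_deg_eq_of_mem_degSeq (G := G) (hdeg ▸ Multiset.mem_cons_self x M)
  exact ⟨_, inferInstance, attachLeaf G v, isAcyclic_attachLeaves hG _, degSeq_attachLeaf hdeg,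
    hk.trans (domNum_le_domNum_attachLeaves G _)⟩

lemma IsForestRealizable.add_replicate_three_two (h : IsForestRealizable (1 ::ₘ M) k) :
    IsForestRealizable (1 ::ₘ (M + Multiset.replicate 3 2)) (k + 1) := by
  obtain ⟨V, _, G, hG, hdeg, hk⟩ := h
  obtain ⟨v, hv⟩ := exists_deg_eq_of_mem_degSeq (G := G) (hdeg ▸ Multiset.mem_cons_self 1 M)
  have hacyclic : (attachPathThree G v).IsAcyclic :=
    isAcyclic_attachLeaves (isAcyclic_attachLeaves (isAcyclic_attachLeaves hG _) _) _
  have hextend {W : Type} [Fintype W] {H : SimpleGraph W} {w : W} {N : Multiset ℕ}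
      (hw : deg H w = 1) (hH : degSeq H = 1 ::ₘ N) :
      degSeq (attachLeaf H w) = 1 ::ₘ 2 ::ₘ N := by
    rw [← hw] at hH
    rw [degSeq_attachLeaf hH, hw]
  refine ⟨_, inferInstance, attachPathThree G v, hacyclic, ?_,
    Nat.succ_le_of_lt (hk.trans_lt (domNum_lt_domNum_attachPathThree G v))⟩
  rw [hextend (deg_attachLeaves_inr _ _ _) (hextend (deg_attachLeaves_inr _ _ _) (hextend hv hdeg))]
  simp [Multiset.replicate_succ, ← Multiset.singleton_add, add_comm, add_left_comm]

lemma IsForestRealizable.add_replicate_two (h : IsForestRealizable (1 ::ₘ M) k) (m : ℕ) :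
    IsForestRealizable (1 ::ₘ (M + Multiset.replicate m 2)) (k + m / 3) := by
  induction m using Nat.strong_induction_on with
  | _ m ih =>
    match m with
    | 0 => simpa using h
    | 1 => simpa [add_comm M] using h.cons_one_cons_succ
    | 2 => simpa [add_comm M] using (h.cons_one_cons_succ).cons_one_cons_succ
    | m + 3 =>
      have hstep := (ih m (by omega)).add_replicate_three_two
      rwa [add_assoc, ← Multiset.replicate_add, add_assoc,
        ← Nat.add_div_right m (by norm_num : 0 < 3)] at hstep

lemma two_mul_countP_pos_le_sum_add_count_one (D : Multiset ℕ) :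
    2 * D.countP (0 < ·) ≤ D.sum + D.count 1 := by
  induction D using Multiset.induction_on with
  | empty => simp
  | cons x D ih =>
    rw [Multiset.countP_cons, Multiset.sum_cons, Multiset.count_cons]
    grind

lemma sum_eq_countP_pos_of_forall_le_one (hD : ∀ x ∈ D, x ≤ 1) : D.sum = D.countP (0 < ·) := by
  induction D using Multiset.induction_on with
  | empty => simp
  | cons x D ih =>
    rw [Multiset.forall_mem_cons] at hD
    rw [Multiset.countP_cons, Multiset.sum_cons, ih hD.2]
    grind

lemma isForestRealizable_replicate_zero (n : ℕ) :
    IsForestRealizable (Multiset.replicate n 0) 0 := by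
  refine ⟨Fin n, inferInstance, ⊥, isAcyclic_bot, ?_, Nat.zero_le _⟩
  have hdeg : deg (⊥ : SimpleGraph (Fin n)) = Function.const _ 0 := by
    ext v
    simp [deg]
  rw [degSeq, hdeg, Multiset.map_const, card_val, card_univ, Fintype.card_fin]

lemma exists_eq_one_cons_succ_cons (heven : Even D.sum) (hne : D.sum ≠ 0)
    (hsum : D.sum < 2 * D.countP (0 < ·)) :
    ∃ x M, D = 1 ::ₘ (x + 1) ::ₘ M ∧
      ((x ::ₘ M).sum = 0 ∨ (x ::ₘ M).sum < 2 * (x ::ₘ M).countP (0 < ·)) := by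
  have hone : 1 ∈ D := by
    have := two_mul_countP_pos_le_sum_add_count_one D
    rw [← Multiset.one_le_count_iff_mem]
    omega
  obtain ⟨E, rfl⟩ := Multiset.exists_cons_of_mem hone
  by_cases hE : ∃ y ∈ E, 2 ≤ y
  · obtain ⟨y, hy, hy2⟩ := hE
    obtain ⟨x, rfl⟩ := Nat.exists_eq_add_of_lt hy2
    obtain ⟨M, rfl⟩ := Multiset.exists_cons_of_mem hy
    refine ⟨_, M, rfl, Or.inr ?_⟩
    simp only [Multiset.sum_cons, Multiset.countP_cons] at hsum ⊢
    grind
  · push Not at hE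
    obtain ⟨y, hy, hy0⟩ : ∃ y ∈ E, y ≠ 0 := by
      by_contra! hzero
      rw [Multiset.sum_cons, Multiset.sum_eq_zero hzero] at heven
      exact absurd heven (by decide)
    obtain ⟨M, rfl⟩ := Multiset.exists_cons_of_mem hy
    obtain rfl : y = 1 := by grind
    have hM : M.sum = M.countP (0 < ·) :=
      sum_eq_countP_pos_of_forall_le_one fun x hx =>
        Nat.le_of_lt_succ (hE x (Multiset.mem_cons_of_mem hx))
    refine ⟨0, M, rfl, ?_⟩
    simp only [Multiset.sum_cons, Multiset.countP_cons]
    grind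

-- Zero entries are allowed because lowering an entry of `1, 1` produces one.
lemma isForestRealizable_zero (heven : Even D.sum)
    (hsum : D.sum = 0 ∨ D.sum < 2 * D.countP (0 < ·)) : IsForestRealizable D 0 := by
  induction hn : D.card generalizing D with
  | zero =>
    rw [Multiset.card_eq_zero.mp hn]
    exact isForestRealizable_replicate_zero 0
  | succ n ih =>
    by_cases hne : D.sum = 0
    · rw [Multiset.eq_replicate_card.mpr (Multiset.sum_eq_zero_iff.mp hne)]
      exact isForestRealizable_replicate_zero _
    · obtain ⟨x, M, rfl, hsum'⟩ :=
        exists_eq_one_cons_succ_cons heven hne (hsum.resolve_left hne)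
      refine (ih ?_ hsum' ?_).cons_one_cons_succ
      · simp only [Multiset.sum_cons] at heven ⊢
        grind
      · simpa using hn

lemma IsForestRealizable.corona (h : IsForestRealizable D k) :
    IsForestRealizable (D.map (· + 1) + Multiset.replicate D.card 1) D.card := by
  obtain ⟨V, _, G, hG, rfl, -⟩ := h
  rw [card_degSeq]
  exact ⟨_, inferInstance, attachLeaves G id, isAcyclic_attachLeaves hG _,
    degSeq_attachLeaves_id G, card_le_domNum_attachLeaves_of_surjective Function.surjective_id⟩

lemma exists_eq_corona_add_replicate_two (hpos : ∀ x ∈ D, 0 < x) (hsum : D.sum < 2 * D.card)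
    (hone : 2 * D.count 1 ≤ D.card) :
    ∃ (F : Multiset ℕ) (m : ℕ), (∀ x ∈ F, 0 < x) ∧ F.card = D.count 1 ∧
      D = F.map (· + 1) + Multiset.replicate F.card 1 + Multiset.replicate m 2 := by
  let T := D.filter (3 ≤ ·)
  have hD : D = T + Multiset.replicate (D.count 1) 1 + Multiset.replicate (D.count 2) 2 := by
    ext x
    by_cases hx : x = 0
    · subst hx
      have h0 : 0 ∉ D := fun h => (hpos 0 h).false
      simp [T, Multiset.count_replicate, Multiset.count_eq_zero_of_notMem h0]
    · simp only [T, Multiset.count_add, Multiset.count_filter, Multiset.count_replicate]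
      grind
  have hTsum : T.card * 3 ≤ T.sum :=
    Multiset.card_nsmul_le_sum (s := T) fun x hx => (Multiset.mem_filter.mp hx).2
  have hDcard := congrArg Multiset.card hD
  have hDsum := congrArg Multiset.sum hD
  simp only [Multiset.card_add, Multiset.sum_add, Multiset.card_replicate,
    Multiset.sum_replicate, smul_eq_mul] at hDcard hDsum
  have hTpred : (T.map (· - 1)).map (· + 1) = T := by
    rw [Multiset.map_map]
    refine (Multiset.map_congr rfl fun x hx => ?_).trans (Multiset.map_id T)
    exact Nat.sub_add_cancel (hpos x (Multiset.mem_filter.mp hx).1)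
  have hFcard : (T.map (· - 1) + Multiset.replicate (D.count 1 - T.card) 1).card = D.count 1 := by
    rw [Multiset.card_add, Multiset.card_map, Multiset.card_replicate]
    omega
  refine ⟨T.map (· - 1) + Multiset.replicate (D.count 1 - T.card) 1,
    D.count 2 - (D.count 1 - T.card), ?_, hFcard, ?_⟩
  · intro x hx
    rcases Multiset.mem_add.mp hx with hx | hx
    · obtain ⟨y, hy, rfl⟩ := Multiset.mem_map.mp hx
      have := (Multiset.mem_filter.mp hy).2
      omega
    · exact (Multiset.eq_of_mem_replicate hx).symm ▸ one_pos
  · rw [hFcard, Multiset.map_add, hTpred, Multiset.map_replicate, add_right_comm, add_assoc T,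
      ← Multiset.replicate_add, Nat.add_sub_cancel' (by omega), add_right_comm]
    exact hD

lemma isForestRealizable_card_add_count_one_div_three (hpos : ∀ x ∈ D, 0 < x)
    (heven : Even D.sum) (hsum : D.sum < 2 * D.card) (hone : 2 * D.count 1 ≤ D.card) :
    IsForestRealizable D ((D.card + D.count 1) / 3) := by
  obtain ⟨F, m, hF, hFcard, hD⟩ := exists_eq_corona_add_replicate_two hpos hsum hone
  have hDcard := congrArg Multiset.card hD
  have hDsum := congrArg Multiset.sum hD
  simp only [Multiset.card_add, Multiset.card_map, Multiset.card_replicate, Multiset.sum_add,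
    Multiset.sum_map_add, Multiset.map_id', Multiset.map_const', Multiset.sum_replicate,
    smul_eq_mul] at hDcard hDsum
  have hFreal : IsForestRealizable F 0 := by
    refine isForestRealizable_zero (by grind) (Or.inr ?_)
    rw [Multiset.countP_eq_card.mpr hF]
    omega
  obtain ⟨a, ha⟩ : ∃ a, F.card = a + 1 := Nat.exists_eq_succ_of_ne_zero (by omega)
  have hcorona : IsForestRealizable (1 ::ₘ (F.map (· + 1) + Multiset.replicate a 1)) F.card := by
    simpa [ha, Multiset.replicate_succ] using hFreal.corona
  have hlong := hcorona.add_replicate_two m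
  rw [← Multiset.cons_add, ← Multiset.add_cons, ← Multiset.replicate_succ, ← ha, ← hD] at hlong
  rwa [show (D.card + D.count 1) / 3 = F.card + m / 3 by omega]

lemma IsForestRealizable.exists_graph {V : Type*} [Fintype V] (h : IsForestRealizable D k)
    (hV : Fintype.card V = D.card) :
    ∃ G : SimpleGraph V, G.IsAcyclic ∧ degSeq G = D ∧ k ≤ domNum G := by
  obtain ⟨W, _, H, hH, rfl, hk⟩ := h
  let e : V ≃ W := Fintype.equivOfCardEq (hV.trans (card_degSeq H))
  have hdeg : deg (H.comap e) = deg H ∘ e := by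
    ext v
    exact Nat.card_congr (e.subtypeEquiv fun _ => Iff.rfl)
  refine ⟨H.comap e, hH.comap (Hom.comap e H) e.injective, ?_, hk.trans ?_⟩
  · rw [degSeq, hdeg, ← Multiset.map_map, Multiset.map_univ_val_equiv, degSeq]
  · refine domNum_le_of_mapsTo e fun w => ⟨e.symm w, ?_⟩
    rintro v (rfl | hv)
    · exact Or.inl (e.apply_symm_apply w)
    · exact Or.inr (by simpa using hv)

end Realization

section MaximumDominationNumber

variable {V : Type*} [Fintype V]

lemma count_one_map_univ_val (d : V → ℕ) : (univ.val.map d).count 1 = #{v | d v = 1} := by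
  rw [Multiset.count_map, card_def, filter_val]
  simp only [eq_comm]

lemma three_mul_domNum_le_of_degSeq_eq {G : SimpleGraph V} {d : V → ℕ} (hG : G.IsAcyclic)
    (hpos : ∀ v, 0 < d v) (hd : degSeq G = univ.val.map d) :
    3 * domNum G ≤ Fintype.card V + #{v | d v = 1} := by
  have hGpos (v : V) : 0 < deg G v := by
    have hv : deg G v ∈ univ.val.map d := hd ▸ Multiset.mem_map_of_mem _ (mem_univ_val v)
    obtain ⟨w, -, hw⟩ := Multiset.mem_map.mp hv
    exact hw ▸ hpos w
  rw [← count_one_map_univ_val, ← hd, degSeq, count_one_map_univ_val]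
  exact three_mul_domNum_le_card_add_card_leaves hG hGpos

lemma exists_isAcyclic_card_add_card_div_three_le_domNum {d : V → ℕ} (hpos : ∀ v, 0 < d v)
    (heven : Even (∑ v, d v)) (hsum : ∑ v, d v < 2 * Fintype.card V)
    (hone : 2 * #{v | d v = 1} ≤ Fintype.card V) :
    ∃ G : SimpleGraph V, G.IsAcyclic ∧ degSeq G = univ.val.map d ∧
      (Fintype.card V + #{v | d v = 1}) / 3 ≤ domNum G := by
  have hcard : (univ.val.map d).card = Fintype.card V := by simp
  have hreal := isForestRealizable_card_add_count_one_div_three (D := univ.val.map d)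
    (by simpa using hpos) heven (by rwa [hcard]) (by rwa [hcard, count_one_map_univ_val])
  rw [hcard, count_one_map_univ_val] at hreal
  exact hreal.exists_graph hcard.symm

lemma two_mul_card_filter_eq_one_le_card {d : V → ℕ} (h12 : #{v | d v = 1} ≤ #{v | 2 ≤ d v}) :
    2 * #{v | d v = 1} ≤ Fintype.card V := by
  have hdisj : Disjoint ({v | d v = 1} : Finset V) ({v | 2 ≤ d v} : Finset V) :=
    disjoint_filter.mpr fun v _ hv => by omega
  have hunion := card_le_univ (disjUnion _ _ hdisj)
  rw [card_disjUnion] at hunion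
  omega

theorem stmt_8_general (c : ℕ) (hc : 0 < c) (d : V → ℕ) (hpos : ∀ v, 0 < d v)
    (hsum : ∑ v, d v = 2 * Fintype.card V - 2 * c) (h12 : #{v | d v = 1} ≤ #{v | 2 ≤ d v}) :
    IsGreatest {k | ∃ G : SimpleGraph V, G.IsAcyclic ∧ degSeq G = univ.val.map d ∧ domNum G = k}
      ((Fintype.card V + #{v | d v = 1} - 2) ⌈/⌉ 3) := by
  have hone := two_mul_card_filter_eq_one_le_card h12
  have hcard : Fintype.card V ≤ ∑ v, d v := by
    simpa using card_nsmul_le_sum univ d 1 fun v _ => hpos v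
  have hvalue : (Fintype.card V + #{v | d v = 1} - 2) ⌈/⌉ 3 =
      (Fintype.card V + #{v | d v = 1}) / 3 := by
    rw [Nat.ceilDiv_eq_add_pred_div]
    omega
  have hupper {G : SimpleGraph V} (hG : G.IsAcyclic) (hd : degSeq G = univ.val.map d) :
      domNum G ≤ (Fintype.card V + #{v | d v = 1}) / 3 := by
    have := three_mul_domNum_le_of_degSeq_eq hG hpos hd
    omega
  rw [hvalue]
  constructor
  · obtain ⟨G, hG, hd, hlower⟩ : ∃ G : SimpleGraph V, G.IsAcyclic ∧ degSeq G = univ.val.map d ∧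
        (Fintype.card V + #{v | d v = 1}) / 3 ≤ domNum G := by
      rcases isEmpty_or_nonempty V with hV | hV
      · exact ⟨⊥, isAcyclic_bot, by simp [degSeq], by simp⟩
      · have hVpos : 0 < Fintype.card V := Fintype.card_pos
        exact exists_isAcyclic_card_add_card_div_three_le_domNum hpos
          ⟨Fintype.card V - c, by omega⟩ (by omega) hone
    exact ⟨G, hG, hd, (hupper hG hd).antisymm hlower⟩
  · rintro _ ⟨G, hG, hd, rfl⟩
    exact hupper hG hd

end MaximumDominationNumber

theorem stmt_8 (n c : ℕ) (hc : 0 < c) (d : Fin n → ℕ) (hmono : Antitone d)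
    (hpos : ∀ i, 0 < d i) (hsum : ∑ i, d i = 2 * n - 2 * c)
    (hd1 : ∀ i : Fin n, (i : ℕ) = 0 → 2 ≤ d i)
    (h12 : (Finset.univ.filter fun i => d i = 1).card ≤ (Finset.univ.filter fun i => 2 ≤ d i).card) :
    IsGreatest {k | ∃ G : SimpleGraph (Fin n), G.IsAcyclic ∧
        degSeq G = Finset.univ.val.map d ∧ domNum G = k}
      ((n + (Finset.univ.filter fun i => d i = 1).card - 2) ⌈/⌉ 3) := by
  simpa only [Fintype.card_fin] using stmt_8_general c hc d hpos (by rwa [Fintype.card_fin]) h12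
end
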